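/- arXiv:math-ph/0702002 — 2 statements merged into one kernel-verified Lean document; each statement's English description precedes it below -/
import Mathlib

section
/- The set M(Ω₁,Ω₂), with the subspace topology inherited from ℝ^{Ω₁×Ω₂}, is connected if and only if n₁ < n₂. -/
/-!
Write `n = |Ω₁|`. Mutual information splits as `I(p) = H(p₁) - H(p₁ | p₂)`, where `H(p₁) ≤ log n`
with equality only for the uniform distribution, and `H(p₁ | p₂) ≥ 0` with equality only if the
second coordinate determines the first. Hence (`Mset_eq_faceUnion`) `M(Ω₁,Ω₂)` consists of the
nonnegative `p` with uniform first marginal that are supported on the transposed graph of some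
function `f : Ω₂ → Ω₁`; for each `f` these `p` form a convex set, nonempty only if `f` is
surjective.

If `|Ω₁| = |Ω₂|`, such an `f` is a bijection, so every coordinate of a point of `M` is `0` or
`1 / n`. Both values occur as soon as `n ≥ 2`, so a coordinate function violates the intermediate
value property and `M` is not connected.

If `|Ω₁| < |Ω₂|`, each `p ∈ M` supported on `f` is joined by a segment to the uniform distribution
on the graph of a section `s : Ω₁ → Ω₂` of `f`. The segment between the uniform distributions on the
graphs of two injections that differ at a single point stays in `M`. Two arbitrary injections
differ by a permutation of `Ω₂`, hence by a sequence of transpositions; and a transposition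
of two values of `s` is carried out by three one-point changes, using a point outside the range of
`s` as a temporary place. So `M` is path connected.
-/

open Finset

/-- A probability distribution on a finite set: nonnegative and summing to 1. -/
def IsProbDist {α : Type*} [Fintype α] (p : α → ℝ) : Prop :=
  (∀ a, 0 ≤ p a) ∧ ∑ a, p a = 1

/-- Shannon entropy (with `0 * log 0 = 0`, automatic since `Real.log 0 = 0`). -/
noncomputable def entropy {α : Type*} [Fintype α] (p : α → ℝ) : ℝ :=
  - ∑ a, p a * Real.log (p a)

/-- First marginal of a distribution on `Ω₁ × Ω₂`. -/
noncomputable def marg1 {Ω₁ Ω₂ : Type*} [Fintype Ω₂] (p : Ω₁ × Ω₂ → ℝ) : Ω₁ → ℝ :=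
  fun a => ∑ b, p (a, b)

/-- Second marginal of a distribution on `Ω₁ × Ω₂`. -/
noncomputable def marg2 {Ω₁ Ω₂ : Type*} [Fintype Ω₁] (p : Ω₁ × Ω₂ → ℝ) : Ω₂ → ℝ :=
  fun b => ∑ a, p (a, b)

/-- Mutual information `I(p) = H(p₁) + H(p₂) − H(p)`. -/
noncomputable def mutualInfo {Ω₁ Ω₂ : Type*} [Fintype Ω₁] [Fintype Ω₂]
    (p : Ω₁ × Ω₂ → ℝ) : ℝ :=
  entropy (marg1 p) + entropy (marg2 p) - entropy p

/-- `M(Ω₁,Ω₂)`: the set of global maximizers of mutual information, viewed inside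
`ℝ^{Ω₁×Ω₂}`. -/
noncomputable def Mset (Ω₁ Ω₂ : Type*) [Fintype Ω₁] [Fintype Ω₂] :
    Set (Ω₁ × Ω₂ → ℝ) :=
  {p | IsProbDist p ∧ mutualInfo p = Real.log (Fintype.card Ω₁)}

/-! ### Entropy estimates -/

section Entropy

/-- A point `q` contributes at most `q log n + 1/n - q` to the entropy (the inequality
`log x ≤ x - 1` at `x = 1/(nq)`). Summed over a distribution on `n` points these bounds
give `log n`. -/
lemma neg_mul_log_le {n q : ℝ} (hn : 0 < n) (hq : 0 ≤ q) :
    -(q * Real.log q) ≤ q * Real.log n + (1 / n - q) := by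
  rcases hq.eq_or_lt with rfl | hq
  · simp [hn.le]
  · have h := Real.log_le_sub_one_of_pos (x := 1 / (n * q)) (by positivity)
    rw [one_div, Real.log_inv, Real.log_mul hn.ne' hq.ne'] at h
    have h' := mul_le_mul_of_nonneg_left h hq.le
    have e : q * ((n * q)⁻¹ - 1) = 1 / n - q := by field_simp
    rw [e] at h'
    linarith

lemma eq_of_neg_mul_log_eq {n q : ℝ} (hn : 0 < n) (hq : 0 ≤ q)
    (h0 : -(q * Real.log q) = q * Real.log n + (1 / n - q)) : q = 1 / n := by
  rcases hq.eq_or_lt with rfl | hq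
  · simp at h0
    exact absurd h0 hn.ne
  · by_contra hne
    have h := Real.log_lt_sub_one_of_pos (x := 1 / (n * q)) (by positivity) (by
      intro h
      apply hne
      field_simp at h ⊢
      linarith)
    rw [one_div, Real.log_inv, Real.log_mul hn.ne' hq.ne'] at h
    have h' := mul_lt_mul_of_pos_left h hq
    have e : q * ((n * q)⁻¹ - 1) = 1 / n - q := by field_simp
    rw [e] at h'
    linarith

lemma sum_entropy_bound {α : Type*} [Fintype α] [Nonempty α] {q : α → ℝ} (hq : IsProbDist q) :
    ∑ a, (q a * Real.log (Fintype.card α) + (1 / (Fintype.card α : ℝ) - q a)) =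
      Real.log (Fintype.card α) := by
  have hn : (Fintype.card α : ℝ) ≠ 0 := by
    exact_mod_cast Fintype.card_ne_zero
  rw [sum_add_distrib, sum_sub_distrib, ← sum_mul, hq.2]
  simp [hn]

lemma entropy_le_log_card {α : Type*} [Fintype α] [Nonempty α] {q : α → ℝ}
    (hq : IsProbDist q) : entropy q ≤ Real.log (Fintype.card α) := by
  have hn : 0 < (Fintype.card α : ℝ) := by exact_mod_cast Fintype.card_pos
  rw [← sum_entropy_bound hq, entropy, ← sum_neg_distrib]
  exact sum_le_sum fun a _ => neg_mul_log_le hn (hq.1 a)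

lemma eq_uniform_of_entropy_eq {α : Type*} [Fintype α] [Nonempty α] {q : α → ℝ}
    (hq : IsProbDist q) (h : entropy q = Real.log (Fintype.card α)) (a : α) :
    q a = 1 / (Fintype.card α : ℝ) := by
  have hn : 0 < (Fintype.card α : ℝ) := by exact_mod_cast Fintype.card_pos
  rw [← sum_entropy_bound hq, entropy, ← sum_neg_distrib] at h
  exact eq_of_neg_mul_log_eq hn (hq.1 a)
    ((sum_eq_sum_iff_of_le fun a _ => neg_mul_log_le hn (hq.1 a)).1 h a (mem_univ a))

variable {Ω₁ Ω₂ : Type*} [Fintype Ω₁] [Fintype Ω₂]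

/-- The chain rule, with the right-hand side being the conditional entropy of the first coordinate
given the second. -/
lemma entropy_sub_entropy_marg2 (p : Ω₁ × Ω₂ → ℝ) :
    entropy p - entropy (marg2 p) =
      ∑ x : Ω₁ × Ω₂, p x * (Real.log (marg2 p x.2) - Real.log (p x)) := by
  have h : ∑ b, marg2 p b * Real.log (marg2 p b) =
      ∑ x : Ω₁ × Ω₂, p x * Real.log (marg2 p x.2) := by
    rw [Fintype.sum_prod_type_right]
    refine sum_congr rfl fun b _ => ?_
    rw [marg2, sum_mul]
    rfl
  simp only [entropy, mul_sub, sum_sub_distrib, h]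
  ring

lemma le_marg2 {Ω₁ Ω₂ : Type*} [Fintype Ω₁] {p : Ω₁ × Ω₂ → ℝ} (hp : ∀ x, 0 ≤ p x) (x : Ω₁ × Ω₂) : p x ≤ marg2 p x.2 :=
  single_le_sum (f := fun a => p (a, x.2)) (fun _ _ => hp _) (mem_univ x.1)

lemma cond_entropy_term_nonneg {Ω₁ Ω₂ : Type*} [Fintype Ω₁] {p : Ω₁ × Ω₂ → ℝ} (hp : ∀ x, 0 ≤ p x) (x : Ω₁ × Ω₂) :
    0 ≤ p x * (Real.log (marg2 p x.2) - Real.log (p x)) := by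
  rcases (hp x).eq_or_lt with h | h
  · simp [← h]
  · exact mul_nonneg h.le (sub_nonneg.2 (Real.log_le_log h (le_marg2 hp x)))

end Entropy

/-! ### The maximizers of mutual information -/

section Maximizers

variable {Ω₁ Ω₂ : Type*} [Fintype Ω₁] [Fintype Ω₂]

/-- The nonnegative arrays with uniform first marginal, supported on the transposed graph of a
function `f : Ω₂ → Ω₁`. The set is empty unless `f` is surjective. -/
def face (f : Ω₂ → Ω₁) : Set (Ω₁ × Ω₂ → ℝ) :=
  {p | (∀ x, 0 ≤ p x) ∧ (∀ a, ∑ b, p (a, b) = 1 / (Fintype.card Ω₁ : ℝ)) ∧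
    ∀ a b, p (a, b) ≠ 0 → a = f b}

lemma face_convex (f : Ω₂ → Ω₁) : Convex ℝ (face f) := by
  rintro p ⟨hp, hp1, hpf⟩ q ⟨hq, hq1, hqf⟩ s t hs ht hst
  refine ⟨fun x => ?_, fun a => ?_, fun a b h => ?_⟩
  · have := hp x
    have := hq x
    simp only [Pi.add_apply, Pi.smul_apply, smul_eq_mul]
    positivity
  · simp only [Pi.add_apply, Pi.smul_apply, smul_eq_mul]
    rw [sum_add_distrib, ← mul_sum, ← mul_sum, hp1, hq1, ← add_mul, hst, one_mul]
  · by_contra hne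
    apply h
    have h1 : p (a, b) = 0 := by_contra fun h => hne (hpf a b h)
    have h2 : q (a, b) = 0 := by_contra fun h => hne (hqf a b h)
    simp [h1, h2]

lemma face_surjective [Nonempty Ω₁] {f : Ω₂ → Ω₁} {p : Ω₁ × Ω₂ → ℝ} (hp : p ∈ face f) :
    Function.Surjective f := by
  intro a
  have hn : (Fintype.card Ω₁ : ℝ) ≠ 0 := by exact_mod_cast Fintype.card_ne_zero
  have h : ∑ b, p (a, b) ≠ 0 := by
    rw [hp.2.1 a]
    exact one_div_ne_zero hn
  obtain ⟨b, -, hb⟩ := exists_ne_zero_of_sum_ne_zero h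
  exact ⟨b, (hp.2.2 a b hb).symm⟩

lemma exists_mem_face_of_mem_Mset [Nonempty Ω₁] {p : Ω₁ × Ω₂ → ℝ} (hp : p ∈ Mset Ω₁ Ω₂) :
    ∃ f, p ∈ face f := by
  obtain ⟨⟨hp0, hps⟩, hI⟩ := hp
  have hm : IsProbDist (marg1 p) :=
    ⟨fun a => sum_nonneg fun b _ => hp0 _, by
      rw [← hps, Fintype.sum_prod_type]
      rfl⟩
  have hle := entropy_le_log_card hm
  have hchain := entropy_sub_entropy_marg2 p
  have hnn := sum_nonneg fun (x : Ω₁ × Ω₂) (_ : x ∈ univ) => cond_entropy_term_nonneg hp0 x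
  rw [mutualInfo] at hI
  have hH : entropy (marg1 p) = Real.log (Fintype.card Ω₁) := by linarith
  have hC : ∑ x : Ω₁ × Ω₂, p x * (Real.log (marg2 p x.2) - Real.log (p x)) = 0 := by linarith
  rw [sum_eq_zero_iff_of_nonneg fun x _ => cond_entropy_term_nonneg hp0 x] at hC
  have huniq : ∀ b a a', p (a, b) ≠ 0 → p (a', b) ≠ 0 → a' = a := by
    intro b a a' ha ha'
    have hpos : 0 < p (a, b) := lt_of_le_of_ne (hp0 _) ha.symm
    have h0 := hC (a, b) (mem_univ _)
    have hlog : Real.log (marg2 p b) = Real.log (p (a, b)) := by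
      rcases mul_eq_zero.1 h0 with h | h
      · exact absurd h ha
      · exact sub_eq_zero.1 h
    have heq : marg2 p b = p (a, b) :=
      Real.log_injOn_pos (lt_of_lt_of_le hpos (le_marg2 hp0 (a, b))) hpos hlog
    by_contra hne
    classical
    have h2 : ∑ c ∈ ({a, a'} : Finset Ω₁), p (c, b) ≤ marg2 p b :=
      sum_le_sum_of_subset_of_nonneg (subset_univ _) fun c _ _ => hp0 _
    rw [sum_pair (Ne.symm hne)] at h2
    have : 0 < p (a', b) := lt_of_le_of_ne (hp0 _) ha'.symm
    linarith
  have hf : ∀ b, ∃ c, ∀ a, p (a, b) ≠ 0 → a = c := by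
    intro b
    by_cases h : ∃ c, p (c, b) ≠ 0
    · obtain ⟨c, hc⟩ := h
      exact ⟨c, fun a ha => huniq b c a hc ha⟩
    · push Not at h
      exact ⟨Classical.arbitrary Ω₁, fun a ha => absurd (h a) ha⟩
  choose f hf using hf
  exact ⟨f, hp0, fun a => eq_uniform_of_entropy_eq hm hH a, fun a b => hf b a⟩

lemma face_subset_Mset [Nonempty Ω₁] (f : Ω₂ → Ω₁) : face f ⊆ Mset Ω₁ Ω₂ := by
  rintro p ⟨hp0, hp1, hpf⟩
  have hn : (Fintype.card Ω₁ : ℝ) ≠ 0 := by exact_mod_cast Fintype.card_ne_zero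
  have hm2 : ∀ b, marg2 p b = p (f b, b) := fun b =>
    sum_eq_single (f b) (fun a _ ha => by_contra fun h => ha (hpf a b h))
      fun h => absurd (mem_univ _) h
  have hC : entropy p - entropy (marg2 p) = 0 := by
    rw [entropy_sub_entropy_marg2]
    refine sum_eq_zero fun x _ => ?_
    by_cases h : p x = 0
    · simp [h]
    · have := hpf x.1 x.2 h
      rw [hm2, ← this]
      simp
  have hm1 : marg1 p = fun _ => 1 / (Fintype.card Ω₁ : ℝ) := funext hp1
  refine ⟨⟨hp0, ?_⟩, ?_⟩
  · rw [Fintype.sum_prod_type]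
    simp [hp1, hn]
  · have : entropy (marg1 p) = Real.log (Fintype.card Ω₁) := by
      rw [hm1, entropy]
      simp [hn]
    rw [mutualInfo]
    linarith

lemma Mset_eq_faceUnion [Nonempty Ω₁] : Mset Ω₁ Ω₂ = ⋃ f, face f := by
  ext p
  rw [Set.mem_iUnion]
  exact ⟨exists_mem_face_of_mem_Mset, fun ⟨f, hf⟩ => face_subset_Mset f hf⟩

lemma joinedIn_of_mem_face [Nonempty Ω₁] {f : Ω₂ → Ω₁} {p q : Ω₁ × Ω₂ → ℝ}
    (hp : p ∈ face f) (hq : q ∈ face f) : JoinedIn (Mset Ω₁ Ω₂) p q :=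
  JoinedIn.of_segment_subset
    (((face_convex f).segment_subset hp hq).trans (face_subset_Mset f))

open Classical in
/-- The uniform distribution on the graph of `s : Ω₁ → Ω₂`. -/
noncomputable def graphDist (s : Ω₁ → Ω₂) : Ω₁ × Ω₂ → ℝ :=
  fun x => if x.2 = s x.1 then 1 / (Fintype.card Ω₁ : ℝ) else 0

lemma graphDist_mem_face {s : Ω₁ → Ω₂} {f : Ω₂ → Ω₁} (h : Function.LeftInverse f s) :
    graphDist s ∈ face f := by
  refine ⟨fun x => ?_, fun a => ?_, fun a b hab => ?_⟩
  · unfold graphDist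
    split_ifs <;> positivity
  · rw [sum_eq_single (s a)]
    · simp [graphDist]
    · intro b _ hb
      simp [graphDist, hb]
    · exact fun h => absurd (mem_univ _) h
  · have : b = s a := by
      by_contra hne
      simp [graphDist, hne] at hab
    rw [this, h a]

/-! ### Moving between injections -/

/-- If two injections differ only at `a`, some function `Ω₂ → Ω₁` is a left inverse of both, so
both distributions lie in a common convex face. -/
lemma joinedIn_of_eq_off [Nonempty Ω₁] {s t : Ω₁ → Ω₂} (hs : Function.Injective s)
    (ht : Function.Injective t) (a : Ω₁) (h : ∀ c, c ≠ a → s c = t c) :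
    JoinedIn (Mset Ω₁ Ω₂) (graphDist s) (graphDist t) := by
  classical
  let f : Ω₂ → Ω₁ := fun b => if b = t a then a else Function.invFun s b
  have hfs : Function.LeftInverse f s := by
    intro c
    by_cases hc : s c = t a
    · have : c = a := by
        by_contra hne
        exact hne (ht (by rw [← h c hne, hc]))
      rw [this]
      simp [f, ← hc, this]
    · simp only [f, hc, if_false]
      exact Function.leftInverse_invFun hs c
  have hft : Function.LeftInverse f t := by
    intro c
    by_cases hc : c = a
    · simp [f, hc]
    · have : t c ≠ t a := fun e => hc (ht e)
      rw [← h c hc] at this ⊢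
      exact hfs c
  exact joinedIn_of_mem_face (graphDist_mem_face hfs) (graphDist_mem_face hft)

lemma update_injective {Ω₁ Ω₂ : Type*} [DecidableEq Ω₁] {s : Ω₁ → Ω₂} (hs : Function.Injective s) (a : Ω₁)
    {c : Ω₂} (hc : ∀ d, d ≠ a → s d ≠ c) : Function.Injective (Function.update s a c) := by
  intro d e hde
  by_cases hd : d = a <;> by_cases he : e = a
  · rw [hd, he]
  · subst hd
    simp only [Function.update_self, Function.update_of_ne he] at hde
    exact absurd hde.symm (hc e he)
  · subst he
    simp only [Function.update_self, Function.update_of_ne hd] at hde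
    exact absurd hde (hc d hd)
  · simp only [Function.update_of_ne hd, Function.update_of_ne he] at hde
    exact hs hde

lemma joinedIn_swap [Nonempty Ω₁] [DecidableEq Ω₂]
    (h12 : Fintype.card Ω₁ < Fintype.card Ω₂) {s : Ω₁ → Ω₂}
    (hs : Function.Injective s) (x y : Ω₂) :
    JoinedIn (Mset Ω₁ Ω₂) (graphDist s) (graphDist (Equiv.swap x y ∘ s)) := by
  classical
  have hst : Function.Injective (Equiv.swap x y ∘ s) := (Equiv.swap x y).injective.comp hs
  by_cases hx : ∃ a, s a = x
  · obtain ⟨a, rfl⟩ := hx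
    by_cases hy : ∃ a', s a' = y
    · obtain ⟨a', rfl⟩ := hy
      obtain ⟨c, hc⟩ : ∃ c, ∀ d, s d ≠ c := by
        by_contra! hsurj
        exact absurd (Fintype.card_le_of_surjective s hsurj) (not_le.2 h12)
      by_cases haa : a = a'
      · subst haa
        exact joinedIn_of_eq_off hs hst a fun d _ => by simp
      -- `a` is parked at the free point `c` while `a'` takes the old place of `a`.
      have h1 : Function.Injective (Function.update s a c) := update_injective hs a fun d _ => hc d
      have h2 : Function.Injective (Function.update (Function.update s a c) a' (s a)) := by
        refine update_injective h1 a' fun d _ => ?_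
        by_cases hd : d = a
        · subst hd
          simpa using (hc d).symm
        · rw [Function.update_of_ne hd]
          exact fun e => hd (hs e)
      refine (joinedIn_of_eq_off hs h1 a fun d hd => ?_).trans
        ((joinedIn_of_eq_off h1 h2 a' fun d hd => ?_).trans
          (joinedIn_of_eq_off h2 hst a fun d hd => ?_))
      · rw [Function.update_of_ne hd]
      · rw [Function.update_of_ne hd]
      · by_cases hd' : d = a'
        · subst hd'
          simp
        · rw [Function.update_of_ne hd', Function.update_of_ne hd, Function.comp_apply,
            Equiv.swap_apply_of_ne_of_ne (fun e => hd (hs e)) (fun e => hd' (hs e))]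
    · push Not at hy
      refine joinedIn_of_eq_off hs hst a fun d hd => ?_
      rw [Function.comp_apply, Equiv.swap_apply_of_ne_of_ne (fun e => hd (hs e)) (hy d)]
  · push Not at hx
    by_cases hy : ∃ a', s a' = y
    · obtain ⟨a', rfl⟩ := hy
      refine joinedIn_of_eq_off hs hst a' fun d hd => ?_
      rw [Function.comp_apply, Equiv.swap_apply_of_ne_of_ne (hx d) (fun e => hd (hs e))]
    · push Not at hy
      refine joinedIn_of_eq_off hs hst (Classical.arbitrary Ω₁) fun d hd => ?_
      rw [Function.comp_apply, Equiv.swap_apply_of_ne_of_ne (hx d) (hy d)]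

lemma joinedIn_perm [Nonempty Ω₁] (h12 : Fintype.card Ω₁ < Fintype.card Ω₂) {s : Ω₁ → Ω₂}
    (hs : Function.Injective s) (σ : Equiv.Perm Ω₂) :
    JoinedIn (Mset Ω₁ Ω₂) (graphDist s) (graphDist (σ ∘ s)) := by
  classical
  induction σ using Equiv.Perm.swap_induction_on with
  | one => exact joinedIn_of_eq_off hs hs (Classical.arbitrary Ω₁) fun _ _ => rfl
  | swap_mul f x y _ ih => exact ih.trans (joinedIn_swap h12 (f.injective.comp hs) x y)

lemma joinedIn_graphDist [Nonempty Ω₁] (h12 : Fintype.card Ω₁ < Fintype.card Ω₂)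
    {s t : Ω₁ → Ω₂} (hs : Function.Injective s) (ht : Function.Injective t) :
    JoinedIn (Mset Ω₁ Ω₂) (graphDist s) (graphDist t) := by
  classical
  let e : {b // b ∈ Set.range s} ≃ {b // b ∈ Set.range t} :=
    (Equiv.ofInjective s hs).symm.trans (Equiv.ofInjective t ht)
  have he : ∀ a, e.extendSubtype (s a) = t a := by
    intro a
    rw [Equiv.extendSubtype_apply_of_mem e (s a) ⟨a, rfl⟩]
    simp [e]
  have h := joinedIn_perm h12 hs e.extendSubtype
  rwa [show (e.extendSubtype : Ω₂ → Ω₂) ∘ s = t from funext he] at h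

lemma isPathConnected_Mset [Nonempty Ω₁] (h12 : Fintype.card Ω₁ < Fintype.card Ω₂) :
    IsPathConnected (Mset Ω₁ Ω₂) := by
  obtain ⟨s⟩ := Function.Embedding.nonempty_of_card_le h12.le
  refine ⟨graphDist s, face_subset_Mset _
    (graphDist_mem_face (Function.leftInverse_invFun s.injective)), fun p hp => ?_⟩
  obtain ⟨f, hf⟩ := exists_mem_face_of_mem_Mset hp
  obtain ⟨t, ht⟩ := (face_surjective hf).hasRightInverse
  exact (joinedIn_graphDist h12 s.injective ht.injective).trans
    (joinedIn_of_mem_face (graphDist_mem_face ht) hf)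

/-! ### Equal cardinalities -/

lemma coord_eq_of_card_eq [Nonempty Ω₁] (h12 : Fintype.card Ω₁ = Fintype.card Ω₂)
    {p : Ω₁ × Ω₂ → ℝ} (hp : p ∈ Mset Ω₁ Ω₂) (a : Ω₁) (b : Ω₂) :
    p (a, b) = 0 ∨ p (a, b) = 1 / (Fintype.card Ω₁ : ℝ) := by
  obtain ⟨f, hf⟩ := exists_mem_face_of_mem_Mset hp
  have hinj : Function.Injective f :=
    ((Fintype.bijective_iff_surjective_and_card f).2 ⟨face_surjective hf, h12.symm⟩).1
  by_cases h : p (a, b) = 0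
  · exact Or.inl h
  · right
    rw [← hf.2.1 a]
    symm
    refine sum_eq_single b (fun b' _ hb' => ?_) fun h => absurd (mem_univ _) h
    by_contra h'
    exact hb' (hinj ((hf.2.2 a b' h').symm.trans (hf.2.2 a b h)))

lemma not_isConnected_Mset (h1 : 2 ≤ Fintype.card Ω₁)
    (h12 : Fintype.card Ω₁ = Fintype.card Ω₂) : ¬ IsConnected (Mset Ω₁ Ω₂) := by
  classical
  intro hconn
  have hn : 0 < (Fintype.card Ω₁ : ℝ) := by exact_mod_cast (by omega : 0 < Fintype.card Ω₁)
  obtain ⟨a, a', haa⟩ := Fintype.exists_pair_of_one_lt_card (α := Ω₁) h1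
  have : Nonempty Ω₁ := ⟨a⟩
  let e : Ω₁ ≃ Ω₂ := Fintype.equivOfCardEq h12
  have hmem : ∀ e : Ω₁ ≃ Ω₂, graphDist e ∈ Mset Ω₁ Ω₂ := fun e =>
    face_subset_Mset e.symm (graphDist_mem_face e.symm_apply_apply)
  have himg : IsPreconnected ((fun p : Ω₁ × Ω₂ → ℝ => p (a, e a)) '' Mset Ω₁ Ω₂) :=
    hconn.isPreconnected.image _ (continuous_apply _).continuousOn
  have hone : 1 / (Fintype.card Ω₁ : ℝ) ∈ (fun p : Ω₁ × Ω₂ → ℝ => p (a, e a)) '' Mset Ω₁ Ω₂ :=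
    ⟨graphDist e, hmem e, by simp [graphDist]⟩
  have hzero : (0 : ℝ) ∈ (fun p : Ω₁ × Ω₂ → ℝ => p (a, e a)) '' Mset Ω₁ Ω₂ :=
    ⟨graphDist ((Equiv.swap a a').trans e), hmem _, by simp [graphDist, haa]⟩
  have hpos : 0 < 1 / (Fintype.card Ω₁ : ℝ) := by positivity
  obtain ⟨p, hp, hhalf⟩ := himg.ordConnected.out hzero hone
    (⟨by linarith, by linarith⟩ :
      1 / (Fintype.card Ω₁ : ℝ) / 2 ∈ Set.Icc 0 (1 / (Fintype.card Ω₁ : ℝ)))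
  simp only at hhalf
  rcases coord_eq_of_card_eq h12 hp a (e a) with h | h <;> rw [h] at hhalf <;> linarith

end Maximizers

/-- `M(Ω₁,Ω₂)`, with the subspace topology from `ℝ^{Ω₁×Ω₂}`, is connected iff
`n₁ < n₂`. -/
theorem stmt13 {Ω₁ Ω₂ : Type*} [Fintype Ω₁] [Fintype Ω₂]
    (h1 : 2 ≤ Fintype.card Ω₁) (h12 : Fintype.card Ω₁ ≤ Fintype.card Ω₂) :
    IsConnected (Mset Ω₁ Ω₂) ↔ Fintype.card Ω₁ < Fintype.card Ω₂ := by
  have : Nonempty Ω₁ := Fintype.card_pos_iff.1 (by omega)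
  exact ⟨fun h => lt_of_le_of_ne h12 fun e => not_isConnected_Mset h1 e h,
    fun h => (isPathConnected_Mset h).isConnected⟩
end

section
/- Suppose n₁ = n₂ = ⋯ = n_N = n. Then there exists a linear subspace T ⊆ ℝ^Ω containing the constant functions, with dim T ≤ (n² + 3n)/2 + 1, such that every p ∈ M(Ω₁,…,Ω_N) = {p : I(p) = (N−1) ln n} lies in the closure of the exponential family exp(T) in ℝ^Ω (so the exponential family exp(T) has dimension at most (n² + 3n)/2). -/
/-!
Maximizers of the multi-information are uniform distributions on `n` points. Indeed, for any
index `j`,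
`I(p) = ∑ ω, p ω * (log (p ω) - log (p_j (ω j))) + ∑ i ≠ j, H(p_i)`.
The first sum is nonpositive because `p ω ≤ p_j (ω j)`, and each `H(p_i)` is at most `log n`, so
`I(p) = (N - 1) log n` forces `p ω = p_j (ω j)` on the support of `p` and makes `p_i` uniform for
all `i ≠ j`. Using two different choices of `j`, `p ω = 1 / n` wherever `p ω ≠ 0`
(`eq_inv_of_multiInfo_eq`).

A single exponential family reaches every uniform distribution on `n` points, by means of the
moment curve (neighborliness of cyclic polytopes). Label the points of `Ω` by distinct reals `t ω`
and let `T` be the space of the functions `ω ↦ P (t ω)` with `P` a real polynomial of degree at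
most `2 n`; its dimension is at most `2 n + 1 ≤ (n² + 3 n) / 2 + 1`. For a set `S` of `n` points,
`X ω = -∏ s ∈ S, (t ω - t s)²` lies in `T`, vanishes on `S` and is negative elsewhere, so
`gibbs (k • X)` tends to the uniform distribution on `S` as `k → ∞`
(`mem_closure_gibbs_of_exposed`).
-/

open Finset

/-- The `i`-th marginal of a distribution on a finite product. -/
noncomputable def marginal {m : ℕ} {Ω : Fin m → Type*} [∀ i, Fintype (Ω i)]
    [∀ i, DecidableEq (Ω i)] (p : (∀ i, Ω i) → ℝ) (i : Fin m) : Ω i → ℝ :=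
  fun x => ∑ ω : ∀ j, Ω j, if ω i = x then p ω else 0

/-- Multi-information `I(p) = ∑ H(p_i) − H(p)`. -/
noncomputable def multiInfo {m : ℕ} {Ω : Fin m → Type*} [∀ i, Fintype (Ω i)]
    [∀ i, DecidableEq (Ω i)] (p : (∀ i, Ω i) → ℝ) : ℝ :=
  (∑ i, entropy (marginal p i)) - entropy p

/-- The Gibbs measure `exp(X)(ω) = e^{X(ω)} / ∑_{ω'} e^{X(ω')}`. -/
noncomputable def gibbs {α : Type*} [Fintype α] (X : α → ℝ) : α → ℝ :=
  fun a => Real.exp (X a) / ∑ b, Real.exp (X b)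


/-- The pointwise form of Gibbs' inequality against the uniform distribution. -/
lemma negMulLog_le_aux {n : ℕ} (hn : 0 < n) {q : ℝ} (hq : 0 ≤ q) :
    -(q * Real.log q) ≤ q * Real.log n + ((n : ℝ)⁻¹ - q) ∧
      (-(q * Real.log q) = q * Real.log n + ((n : ℝ)⁻¹ - q) → q = (n : ℝ)⁻¹) := by
  have hn' : (0 : ℝ) < n := by exact_mod_cast hn
  rcases hq.eq_or_lt with rfl | hq
  · simp only [zero_mul, neg_zero, sub_zero, zero_add]
    exact ⟨by positivity, fun h => h⟩
  · have hpos : 0 < (n * q)⁻¹ := by positivity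
    have hlog : Real.log (n * q)⁻¹ = -Real.log n - Real.log q := by
      rw [Real.log_inv, Real.log_mul hn'.ne' hq.ne']; ring
    have hmul : q * (n * q)⁻¹ = (n : ℝ)⁻¹ := by field_simp
    constructor
    · have h := mul_le_mul_of_nonneg_left (Real.log_le_sub_one_of_pos hpos) hq.le
      rw [hlog, mul_sub q _ 1, hmul] at h
      linarith
    · intro h
      by_contra hne
      have h1 : (n * q)⁻¹ ≠ 1 := by
        intro h1
        rw [h1, mul_one] at hmul
        exact hne hmul
      have h2 := mul_lt_mul_of_pos_left (Real.log_lt_sub_one_of_pos hpos h1) hq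
      rw [hlog, mul_sub q _ 1, hmul] at h2
      linarith

lemma entropy_le {α : Type*} [Fintype α] {n : ℕ} (hn : 0 < n) (hc : Fintype.card α = n)
    {q : α → ℝ} (hq : IsProbDist q) :
    entropy q ≤ Real.log n ∧ (entropy q = Real.log n → ∀ a, q a = (n : ℝ)⁻¹) := by
  have hn' : (n : ℝ) ≠ 0 := by exact_mod_cast hn.ne'
  have hE : entropy q = ∑ a, -(q a * Real.log (q a)) := by
    simp [entropy]
  have hR : ∑ a, (q a * Real.log n + ((n : ℝ)⁻¹ - q a)) = Real.log n := by
    rw [sum_add_distrib, sum_sub_distrib, ← sum_mul, hq.2]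
    simp [hc, hn']
  have hle : ∀ a ∈ (univ : Finset α), -(q a * Real.log (q a)) ≤
      q a * Real.log n + ((n : ℝ)⁻¹ - q a) := fun a _ => (negMulLog_le_aux hn (hq.1 a)).1
  constructor
  · rw [hE, ← hR]
    exact sum_le_sum hle
  · intro h a
    rw [hE] at h
    have h2 := (sum_eq_sum_iff_of_le hle).1 (h.trans hR.symm) a (mem_univ a)
    exact (negMulLog_le_aux hn (hq.1 a)).2 h2

section Maximizers

variable {N : ℕ} {Ω : Fin N → Type*} [∀ i, Fintype (Ω i)] [∀ i, DecidableEq (Ω i)]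

lemma sum_marginal_mul (p : (∀ i, Ω i) → ℝ) (j : Fin N) (f : Ω j → ℝ) :
    ∑ x, marginal p j x * f x = ∑ ω, p ω * f (ω j) := by
  simp only [marginal, sum_mul]
  rw [sum_comm]
  refine sum_congr rfl fun ω _ => ?_
  simp [ite_mul]

lemma le_marginal {p : (∀ i, Ω i) → ℝ} (hp : IsProbDist p) (j : Fin N) (ω : ∀ i, Ω i) :
    p ω ≤ marginal p j (ω j) := by
  have h := single_le_sum (f := fun ω' : ∀ i, Ω i => if ω' j = ω j then p ω' else 0)
    (fun ω' _ => by split_ifs <;> simp [hp.1]) (mem_univ ω)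
  simpa [marginal] using h

lemma isProbDist_marginal {p : (∀ i, Ω i) → ℝ} (hp : IsProbDist p) (j : Fin N) :
    IsProbDist (marginal p j) := by
  refine ⟨fun x => sum_nonneg fun ω _ => by split_ifs <;> simp [hp.1], ?_⟩
  have h := sum_marginal_mul p j (fun _ => 1)
  simpa [hp.2] using h

/-- The equality case of `I(p) ≤ ∑ i ≠ j, H(p_i) ≤ (N - 1) log n`, for a fixed index `j`. -/
lemma maximizer_aux {n : ℕ} (hn : 0 < n) (hcard : ∀ i, Fintype.card (Ω i) = n)
    {p : (∀ i, Ω i) → ℝ} (hp : IsProbDist p)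
    (hI : multiInfo p = ((N - 1 : ℕ) : ℝ) * Real.log n) (j : Fin N) :
    (∀ i, i ≠ j → ∀ x, marginal p i x = (n : ℝ)⁻¹) ∧
      ∀ ω, p ω ≠ 0 → p ω = marginal p j (ω j) := by
  have hterm : ∀ ω ∈ (univ : Finset (∀ i, Ω i)),
      p ω * Real.log (p ω) ≤ p ω * Real.log (marginal p j (ω j)) := by
    intro ω _
    rcases (hp.1 ω).eq_or_lt with h | h
    · simp [← h]
    · exact mul_le_mul_of_nonneg_left (Real.log_le_log h (le_marginal hp j ω)) h.le
  have hle : ∀ i ∈ univ.erase j, entropy (marginal p i) ≤ Real.log n := fun i _ =>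
    (entropy_le hn (hcard i) (isProbDist_marginal hp i)).1
  have hcst : ∑ _i ∈ univ.erase j, Real.log (n : ℝ) = ((N - 1 : ℕ) : ℝ) * Real.log n := by
    rw [sum_const, card_erase_of_mem (mem_univ j), card_univ, Fintype.card_fin, nsmul_eq_mul]
  have hHj : entropy (marginal p j) = -∑ ω, p ω * Real.log (marginal p j (ω j)) := by
    rw [entropy, sum_marginal_mul p j (fun x => Real.log (marginal p j x))]
  have hsplit := add_sum_erase univ (fun i => entropy (marginal p i)) (mem_univ j)
  have hS1 := sum_le_sum hterm
  have hS2 := sum_le_sum hle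
  rw [multiInfo, ← hsplit] at hI
  simp only [hHj] at hI
  rw [entropy] at hI
  constructor
  · intro i hi
    have h := (sum_eq_sum_iff_of_le hle).1 (by linarith) i (mem_erase.2 ⟨hi, mem_univ i⟩)
    exact (entropy_le hn (hcard i) (isProbDist_marginal hp i)).2 h
  · intro ω hω
    have h := (sum_eq_sum_iff_of_le hterm).1 (by linarith) ω (mem_univ ω)
    have hpos : 0 < p ω := lt_of_le_of_ne (hp.1 ω) hω.symm
    exact Real.log_injOn_pos hpos (hpos.trans_le (le_marginal hp j ω)) (mul_left_cancel₀ hω h)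

lemma eq_inv_of_multiInfo_eq (hN : 2 ≤ N) {n : ℕ} (hn : 0 < n)
    (hcard : ∀ i, Fintype.card (Ω i) = n) {p : (∀ i, Ω i) → ℝ} (hp : IsProbDist p)
    (hI : multiInfo p = ((N - 1 : ℕ) : ℝ) * Real.log n) (ω : ∀ i, Ω i) (hω : p ω ≠ 0) :
    p ω = (n : ℝ)⁻¹ := by
  let i : Fin N := ⟨0, by omega⟩
  let j : Fin N := ⟨1, by omega⟩
  have hij : i ≠ j := by simp [i, j]
  rw [(maximizer_aux hn hcard hp hI i).2 ω hω]
  exact (maximizer_aux hn hcard hp hI j).1 i hij _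

end Maximizers

/-- If `X ∈ T` attains its maximum `0` exactly on `S`, then the uniform distribution on `S` is the
limit of `gibbs (k • X)` as `k → ∞`. -/
lemma mem_closure_gibbs_of_exposed {α : Type*} [Fintype α] [DecidableEq α]
    (T : Submodule ℝ (α → ℝ)) {S : Finset α} (hS : S.Nonempty) {X : α → ℝ} (hX : X ∈ T)
    (h0 : ∀ a ∈ S, X a = 0) (hneg : ∀ a ∉ S, X a < 0) :
    (fun a => if a ∈ S then ((#S : ℕ) : ℝ)⁻¹ else 0) ∈
      closure (gibbs '' (T : Set (α → ℝ))) := by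
  have hexp : ∀ a, Filter.Tendsto (fun k : ℕ => Real.exp (((k : ℝ) • X) a)) Filter.atTop
      (nhds (if a ∈ S then 1 else 0)) := by
    intro a
    by_cases ha : a ∈ S
    · simp [ha, h0 a ha]
    · simp only [ha, if_false, Pi.smul_apply, smul_eq_mul]
      exact Real.tendsto_exp_atBot.comp
        (tendsto_natCast_atTop_atTop.atTop_mul_const_of_neg (hneg a ha))
  have hsum := tendsto_finsetSum (univ : Finset α) fun a _ => hexp a
  have hval : ∑ a, (if a ∈ S then (1 : ℝ) else 0) = (#S : ℕ) := by simp
  rw [hval] at hsum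
  have hne : ((#S : ℕ) : ℝ) ≠ 0 := by exact_mod_cast hS.card_pos.ne'
  refine mem_closure_of_tendsto (f := fun k : ℕ => gibbs ((k : ℝ) • X)) (b := Filter.atTop) ?_
    (Filter.Eventually.of_forall fun k => ⟨_, T.smul_mem _ hX, rfl⟩)
  rw [tendsto_pi_nhds]
  intro a
  have h := (hexp a).div hsum hne
  have hlim : (if a ∈ S then ((#S : ℕ) : ℝ)⁻¹ else 0) = (if a ∈ S then 1 else 0) / (#S : ℕ) := by
    split_ifs <;> simp
  rw [hlim]
  exact h

/-- Evaluation of real polynomials at the points `t a`, i.e. the linear functionals on the moment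
curve restricted to finitely many of its points. -/
noncomputable def evalMap {α : Type*} (t : α → ℝ) : Polynomial ℝ →ₗ[ℝ] (α → ℝ) :=
  LinearMap.pi fun a => Polynomial.leval (t a)

/-- Case `n₁ = ⋯ = n_N = n` (`N ≥ 2` units): there is a linear subspace
`T ⊆ ℝ^Ω` containing the constants, with `dim T ≤ (n²+3n)/2 + 1`, such that every
global maximizer of multi-information lies in the closure of the exponential family
`exp(T)` in `ℝ^Ω`. -/
theorem stmt16 {N : ℕ} (hN : 2 ≤ N) (Ω : Fin N → Type*) [∀ i, Fintype (Ω i)]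
    [∀ i, DecidableEq (Ω i)] (n : ℕ) (hn : 2 ≤ n)
    (hcard : ∀ i, Fintype.card (Ω i) = n) :
    ∃ T : Submodule ℝ ((∀ i, Ω i) → ℝ),
      (∀ c : ℝ, (fun _ => c) ∈ T) ∧
      Module.finrank ℝ T ≤ (n ^ 2 + 3 * n) / 2 + 1 ∧
      ∀ p : (∀ i, Ω i) → ℝ, IsProbDist p →
        multiInfo p = ((N - 1 : ℕ) : ℝ) * Real.log n →
        p ∈ closure (gibbs '' (T : Set ((∀ i, Ω i) → ℝ))) := by
  let t : (∀ i, Ω i) → ℝ := fun ω => ((Fintype.equivFin (∀ i, Ω i) ω : ℕ) : ℝ)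
  have ht : Function.Injective t := fun a b h => by
    simpa [t, Fin.val_inj] using h
  have heval : ∀ P ω, evalMap t P ω = P.eval (t ω) := fun P ω => rfl
  refine ⟨(Polynomial.degreeLT ℝ (2 * n + 1)).map (evalMap t), fun c => ?_, ?_, ?_⟩
  · refine ⟨Polynomial.C c, Polynomial.mem_degreeLT.2 ?_, ?_⟩
    · refine Polynomial.degree_C_le.trans_lt ?_
      exact_mod_cast Nat.succ_pos (2 * n)
    · ext ω
      simp [heval]
  · have : Module.Finite ℝ (Polynomial.degreeLT ℝ (2 * n + 1)) :=
      Module.Finite.equiv (Polynomial.degreeLTEquiv ℝ (2 * n + 1)).symm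
    refine (Submodule.finrank_map_le _ _).trans ?_
    rw [(Polynomial.degreeLTEquiv ℝ (2 * n + 1)).finrank_eq, Module.finrank_fin_fun]
    have h : 2 * n ≤ (n ^ 2 + 3 * n) / 2 := by
      rw [Nat.le_div_iff_mul_le two_pos]
      nlinarith
    omega
  · intro p hp hI
    have hn0 : 0 < n := by omega
    have hn' : (n : ℝ) ≠ 0 := by exact_mod_cast hn0.ne'
    have hunif := eq_inv_of_multiInfo_eq hN hn0 hcard hp hI
    let S : Finset (∀ i, Ω i) := {ω | p ω ≠ 0}
    have hpS : p = fun ω => if ω ∈ S then (n : ℝ)⁻¹ else 0 := by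
      ext ω
      by_cases hω : p ω = 0
      · simp [S, hω]
      · simp [S, hunif ω hω]
    have hSn : #S = n := by
      have h := hp.2
      rw [hpS, sum_ite_mem, univ_inter, sum_const, nsmul_eq_mul] at h
      field_simp at h
      exact_mod_cast h
    -- The polynomial `-∏ s ∈ S, (Y - t s)²` has degree `2 n` and is maximal exactly on `S`.
    let P : Polynomial ℝ := -∏ s ∈ S, (Polynomial.X - Polynomial.C (t s)) ^ 2
    have hPeval : ∀ ω, evalMap t P ω = -∏ s ∈ S, (t ω - t s) ^ 2 := by
      intro ω
      simp [heval, P, Polynomial.eval_prod]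
    have hPmem : P ∈ Polynomial.degreeLT ℝ (2 * n + 1) := by
      rw [Polynomial.mem_degreeLT, Polynomial.degree_neg, Polynomial.degree_prod]
      simp only [Polynomial.degree_pow, Polynomial.degree_X_sub_C, sum_const, hSn]
      have : n • 2 • (1 : WithBot ℕ) = ((2 * n : ℕ) : WithBot ℕ) := by
        simp [nsmul_eq_mul, mul_comm]
      rw [this]
      exact_mod_cast Nat.lt_succ_self (2 * n)
    rw [hpS, ← hSn]
    refine mem_closure_gibbs_of_exposed _ (card_pos.1 (by omega))
      (Submodule.mem_map_of_mem (hSn.symm ▸ hPmem)) (fun ω hω => ?_) (fun ω hω => ?_)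
    · rw [hPeval, prod_eq_zero hω (by simp), neg_zero]
    · rw [hPeval, neg_lt_zero]
      refine prod_pos fun s hs => ?_
      have : t ω - t s ≠ 0 := sub_ne_zero.2 fun h => hω (ht h ▸ hs)
      positivity
end
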